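/- Let (V,E,Ψ) be a strongly connected planar box-like self-affine GIFS with positive weights (p_e) and graph-directed measure family (μ_v)_{v∈V}, and fix s∈ℝ and q≥0. (b1) If s ≤ t(q), then ‖A_{k+l}^{s,q}‖ ≤ ‖A_k^{s,q}‖·‖A_l^{s,q}‖ for all k,l≥1. (b2) If s > t(q), then there exist a constant c=c(s,q)>0 and J∈ℕ such that ‖A_{k+1}^{s,q}‖ ≥ c·‖A_k^{s,q}‖ for all k≥1, and max_{0≤j≤J} ‖A_{k+j+l}^{s,q}‖ ≥ c·‖A_k^{s,q}‖·‖A_l^{s,q}‖ for all k,l≥1. -/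

import Mathlib

open MeasureTheory Filter Set
open scoped Classical

noncomputable section

namespace LqGIFS

/-! ### Mesh cubes, moment sums, L^q spectra, box dimension -/

/-- Closed cube of the `δ`-mesh of `ℝ`. -/
def meshCube1 (δ : ℝ) (k : ℤ) : Set ℝ := Set.Icc ((k : ℝ) * δ) (((k : ℝ) + 1) * δ)

/-- Closed cube of the `δ`-mesh of `ℝ²`. -/
def meshCube2 (δ : ℝ) (k : ℤ × ℤ) : Set (ℝ × ℝ) :=
  (Set.Icc ((k.1 : ℝ) * δ) (((k.1 : ℝ) + 1) * δ)) ×ˢ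
    (Set.Icc ((k.2 : ℝ) * δ) (((k.2 : ℝ) + 1) * δ))

/-- The moment sum `D_δ^q(ν)` for a measure on `ℝ` (cubes of zero measure are omitted,
so that at `q = 0` this counts the mesh cubes of positive measure). -/
def Dq1 (ν : Measure ℝ) (δ q : ℝ) : ℝ :=
  ∑' k : ℤ, if ν (meshCube1 δ k) = 0 then 0 else (ν (meshCube1 δ k)).toReal ^ q

/-- The moment sum `D_δ^q(ν)` for a measure on `ℝ²`. -/
def Dq2 (ν : Measure (ℝ × ℝ)) (δ q : ℝ) : ℝ :=
  ∑' k : ℤ × ℤ, if ν (meshCube2 δ k) = 0 then 0 else (ν (meshCube2 δ k)).toReal ^ q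

/-- The `L^q`-spectrum of a measure on `ℝ` exists and equals `s` (i.e. upper and lower
`L^q`-spectra coincide and equal `s`). -/
def HasLq1 (ν : Measure ℝ) (q s : ℝ) : Prop :=
  Tendsto (fun δ : ℝ => Real.log (Dq1 ν δ q) / (-Real.log δ))
    (nhdsWithin 0 (Set.Ioi 0)) (nhds s)

/-- The `L^q`-spectrum of a measure on `ℝ²` exists and equals `s`. -/
def HasLq2 (ν : Measure (ℝ × ℝ)) (q s : ℝ) : Prop :=
  Tendsto (fun δ : ℝ => Real.log (Dq2 ν δ q) / (-Real.log δ))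
    (nhdsWithin 0 (Set.Ioi 0)) (nhds s)

/-- Number of closed `δ`-mesh cubes of `ℝ²` meeting `X`. -/
def boxCount (X : Set (ℝ × ℝ)) (δ : ℝ) : ℕ :=
  Set.ncard {k : ℤ × ℤ | (X ∩ meshCube2 δ k).Nonempty}

/-- The box dimension of `X` exists and equals `d`. -/
def HasBoxDim (X : Set (ℝ × ℝ)) (d : ℝ) : Prop :=
  Tendsto (fun δ : ℝ => Real.log (boxCount X δ) / (-Real.log δ))
    (nhdsWithin 0 (Set.Ioi 0)) (nhds d)

/-! ### Matrices: 1-norm, spectral radius, permutation matrices -/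

/-- The 1-norm `‖A‖ = ∑_{i,j} |a_{ij}|` of a square matrix. -/
def mnorm {ι : Type*} [Fintype ι] (A : Matrix ι ι ℝ) : ℝ := ∑ i, ∑ j, |A i j|

/-- The spectral radius of a square real matrix, via the Gelfand formula. -/
def specRad {ι : Type*} [Fintype ι] [DecidableEq ι] (A : Matrix ι ι ℝ) : ℝ :=
  Filter.limsup (fun k : ℕ => (mnorm (A ^ k)) ^ ((k : ℝ)⁻¹)) Filter.atTop

/-- A square 0-1 matrix with exactly one 1 in each row and each column. -/
def IsPermMatrix {ι : Type*} (Z : Matrix ι ι ℝ) : Prop :=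
  (∀ i j, Z i j = 0 ∨ Z i j = 1) ∧ (∀ i, ∃! j, Z i j = 1) ∧ (∀ j, ∃! i, Z i j = 1)

/-! ### Directed graphs -/

/-- Strong connectivity of the finite directed graph with edge set `E`,
initial vertex map `ini` and terminal vertex map `ter`. -/
def GraphSC {V E : Type*} (ini ter : E → V) : Prop :=
  ∀ v v' : V, Relation.TransGen (fun u u' : V => ∃ e, ini e = u ∧ ter e = u') v v'

/-- The matrix `F^{(q)}_{x,y}` with entry `p_{e'}^q a_{e'}^x b_{e'}^y` at `(e,e')` when
`t(e) = i(e')`, and `0` otherwise. -/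
def FmatG {V E : Type*} (ini ter : E → V) (p a b : E → ℝ) (q x y : ℝ) :
    Matrix E E ℝ :=
  fun e e' => if ter e = ini e' then p e' ^ q * a e' ^ x * b e' ^ y else 0

/-- `f` is the entrywise product of the normalized left and right Perron vectors of the
irreducible matrix `F^{(q)}_{x,y(x)}` (spectral radius 1). -/
def IsPerronData {V E : Type*} [Fintype E] [DecidableEq E] (ini ter : E → V)
    (p a b : E → ℝ) (q x yx : ℝ) (f : E → ℝ) : Prop :=
  specRad (FmatG ini ter p a b q x yx) = 1 ∧
  ∃ u v : E → ℝ, (∀ e, 0 < u e) ∧ (∀ e, 0 < v e) ∧ (∑ e, u e) = 1 ∧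
    (FmatG ini ter p a b q x yx).mulVec u = u ∧
    (FmatG ini ter p a b q x yx).vecMul v = v ∧
    (∑ e, v e * u e) = 1 ∧ (∀ e, f e = v e * u e)

/-! ### Planar box-like graph-directed self-affine systems -/

/-- A planar box-like self-affine GIFS: a finite directed graph together with, for each
edge `e`, a contraction `ψ_e(z) = T_e z + t_e` whose linear part is the diagonal matrix
`diag(±a_e, ±b_e)` (when `diag e = true`) or the anti-diagonal matrix with entries
`±a_e` (top right) and `±b_e` (bottom left) (when `diag e = false`), `0 < a_e, b_e < 1`. -/
structure BoxLikeGIFS (V E : Type*) where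
  init : E → V
  term : E → V
  a : E → ℝ
  b : E → ℝ
  sa : E → ℝ
  sb : E → ℝ
  diag : E → Bool
  trans : E → ℝ × ℝ
  a_mem : ∀ e, a e ∈ Set.Ioo (0 : ℝ) 1
  b_mem : ∀ e, b e ∈ Set.Ioo (0 : ℝ) 1
  sa_mem : ∀ e, sa e = 1 ∨ sa e = -1
  sb_mem : ∀ e, sb e = 1 ∨ sb e = -1
  edge_exists : ∀ v, ∃ e, init e = v

namespace BoxLikeGIFS

variable {V E : Type*}

/-- The contraction `ψ_e`. -/
def map (S : BoxLikeGIFS V E) (e : E) : ℝ × ℝ → ℝ × ℝ := fun z =>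
  if S.diag e then
    (S.sa e * S.a e * z.1 + (S.trans e).1, S.sb e * S.b e * z.2 + (S.trans e).2)
  else
    (S.sa e * S.a e * z.2 + (S.trans e).1, S.sb e * S.b e * z.1 + (S.trans e).2)

def StronglyConnected (S : BoxLikeGIFS V E) : Prop := GraphSC S.init S.term

/-- The open unit square `(0,1)²`. -/
def unitSq : Set (ℝ × ℝ) := Set.Ioo (0 : ℝ) 1 ×ˢ Set.Ioo (0 : ℝ) 1

/-- The rectangular open set condition. -/
def ROSC (S : BoxLikeGIFS V E) : Prop :=
  (∀ e : E, S.map e '' unitSq ⊆ unitSq) ∧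
  ∀ e e' : E, e ≠ e' → S.init e = S.init e' →
    Disjoint (S.map e '' unitSq) (S.map e' '' unitSq)

/-- Positive weights summing to one at each vertex. -/
def IsWeights [Fintype E] (S : BoxLikeGIFS V E) (p : E → ℝ) : Prop :=
  (∀ e, 0 < p e) ∧ ∀ v : V, (∑ e : E, if S.init e = v then p e else 0) = 1

/-- `μ` is the associated graph-directed box-like self-affine measure family. -/
def IsGDMeasure [Fintype E] (S : BoxLikeGIFS V E) (p : E → ℝ)
    (μ : V → Measure (ℝ × ℝ)) : Prop :=
  (∀ v, IsProbabilityMeasure (μ v)) ∧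
  ∀ v : V, μ v =
    ∑ e : E, if S.init e = v then
      ENNReal.ofReal (p e) • ((μ (S.term e)).map (S.map e)) else (0 : Measure (ℝ × ℝ))

/-- `X` is the associated graph-directed self-affine carpet family. -/
def IsGDAttractor (S : BoxLikeGIFS V E) (X : V → Set (ℝ × ℝ)) : Prop :=
  (∀ v, (X v).Nonempty ∧ IsCompact (X v)) ∧
  ∀ v : V, X v = ⋃ e : E, ⋃ _ : S.init e = v, S.map e '' X (S.term e)

/-- The matrix `F^{(q)}_{x,y}` of the system. -/
def Fmat (S : BoxLikeGIFS V E) (p : E → ℝ) (q x y : ℝ) : Matrix E E ℝ :=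
  FmatG S.init S.term p S.a S.b q x y

/-- The `(2#E) × (2#E)` block matrix `𝒢^{(q)}_{x,y}`, indexed by `E × Bool`
(`false` = first index of the block, `true` = second). -/
def Gmat (S : BoxLikeGIFS V E) (p : E → ℝ) (τx τy : V → ℝ) (q x y : ℝ) :
    Matrix (E × Bool) (E × Bool) ℝ := fun i j =>
  if S.term i.1 = S.init j.1 then
    if S.diag j.1 then
      if i.2 = false ∧ j.2 = false then
        p j.1 ^ q * S.a j.1 ^ (x + τx (S.term j.1)) * S.b j.1 ^ (y - τx (S.term j.1))
      else if i.2 = true ∧ j.2 = true then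
        p j.1 ^ q * S.b j.1 ^ (x + τy (S.term j.1)) * S.a j.1 ^ (y - τy (S.term j.1))
      else 0
    else
      if i.2 = false ∧ j.2 = true then
        p j.1 ^ q * S.a j.1 ^ (x + τy (S.term j.1)) * S.b j.1 ^ (y - τy (S.term j.1))
      else if i.2 = true ∧ j.2 = false then
        p j.1 ^ q * S.b j.1 ^ (x + τx (S.term j.1)) * S.a j.1 ^ (y - τx (S.term j.1))
      else 0
  else 0

/-! ### Words -/

/-- An admissible word: consecutive edges are composable. -/
def Admissible (S : BoxLikeGIFS V E) (w : List E) : Prop :=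
  List.Chain' (fun e e' => S.term e = S.init e') w

/-- `(c_w, d_w)`: width and height of the rectangle `ψ_w([0,1]²)`. -/
def wdims (S : BoxLikeGIFS V E) : List E → ℝ × ℝ
  | [] => (1, 1)
  | e :: w =>
      if S.diag e then (S.a e * (wdims S w).1, S.b e * (wdims S w).2)
      else (S.a e * (wdims S w).2, S.b e * (wdims S w).1)

/-- Whether `T_w` is diagonal (`true`) or anti-diagonal (`false`). -/
def wordDiag (S : BoxLikeGIFS V E) : List E → Bool
  | [] => true
  | e :: w => S.diag e == wordDiag S w

/-- The larger singular value `α₁(w) = max(c_w, d_w)` of `T_w`. -/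
def alpha1 (S : BoxLikeGIFS V E) (w : List E) : ℝ := max (S.wdims w).1 (S.wdims w).2

/-- The smaller singular value `α₂(w) = min(c_w, d_w)` of `T_w`. -/
def alpha2 (S : BoxLikeGIFS V E) (w : List E) : ℝ := min (S.wdims w).1 (S.wdims w).2

/-- Initial vertex of a (nonempty) word. -/
def wordInit [Nonempty V] (S : BoxLikeGIFS V E) (w : List E) : V :=
  (w.head?.map S.init).getD (Classical.arbitrary V)

/-- Terminal vertex of a (nonempty) word. -/
def wordTerm [Nonempty V] (S : BoxLikeGIFS V E) (w : List E) : V :=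
  (w.getLast?.map S.term).getD (Classical.arbitrary V)

/-- `p_w = p_{w_1} ⋯ p_{w_k}`. -/
def wordProb (p : E → ℝ) (w : List E) : ℝ := (w.map p).prod

/-- `τ_w(q)`: given the values `τx v`, `τy v` of the `L^q`-spectra of the two coordinate
projections of `μ_v`, this is the `L^q`-spectrum of the projection of `μ_{t(w)} ∘ ψ_w⁻¹`
onto the longest side of `ψ_w([0,1]²)`, i.e. `τx (t w)` if `π_w = π_x` and `τy (t w)`
otherwise. -/
def wordTau [Nonempty V] (S : BoxLikeGIFS V E) (τx τy : V → ℝ) (w : List E) : ℝ :=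
  if ((S.wdims w).2 ≤ (S.wdims w).1 ↔ S.wordDiag w = true) then τx (S.wordTerm w)
  else τy (S.wordTerm w)

/-- The modified singular value function
`φ^{s,q}(w) = p_w^q α₁(w)^{τ_w(q)} α₂(w)^{s - τ_w(q)}`. -/
def msvf [Nonempty V] (S : BoxLikeGIFS V E) (p : E → ℝ) (τx τy : V → ℝ)
    (s q : ℝ) (w : List E) : ℝ :=
  wordProb p w ^ q * S.alpha1 w ^ (S.wordTau τx τy w) *
    S.alpha2 w ^ (s - S.wordTau τx τy w)

/-- The modified singular value function matrix `A_k^{s,q}`. -/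
def Amat [Nonempty V] [Fintype E] (S : BoxLikeGIFS V E) (p : E → ℝ) (τx τy : V → ℝ)
    (s q : ℝ) (k : ℕ) : Matrix V V ℝ := fun v v' =>
  ∑ f : Fin k → E,
    if S.Admissible (List.ofFn f) ∧ S.wordInit (List.ofFn f) = v ∧
        S.wordTerm (List.ofFn f) = v'
    then S.msvf p τx τy s q (List.ofFn f) else 0

/-- The family `E^*_δ` of admissible words whose shortest side drops below `δ`
exactly at the last letter. -/
def EstarDelta (S : BoxLikeGIFS V E) (δ : ℝ) : Set (List E) :=
  {w | w ≠ [] ∧ S.Admissible w ∧ S.alpha2 w < δ ∧ δ ≤ S.alpha2 w.dropLast}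

end BoxLikeGIFS

/-! ### Partition of the projections, for the splitting proposition -/

/-- The projection family: `(v, false) ↦ μ_v^x` and `(v, true) ↦ μ_v^y`. -/
def projMeas {V : Type*} (μ : V → Measure (ℝ × ℝ)) (i : V × Bool) : Measure ℝ :=
  if i.2 then (μ i.1).map Prod.snd else (μ i.1).map Prod.fst

/-- `A`, `B` is a partition of the projection family `{μ_v^x, μ_v^y}_v` into two disjoint
families of cardinality `#V`, on each of which the `L^q`-spectra exist and share a common
value, and which splits `{μ_v^x, μ_v^y}` for each `v`. -/
def GoodPartition {V : Type*} [Fintype V] (μ : V → Measure (ℝ × ℝ))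
    (A B : Finset (V × Bool)) : Prop :=
  Disjoint A B ∧ A ∪ B = Finset.univ ∧
  A.card = Fintype.card V ∧ B.card = Fintype.card V ∧
  ∃ τA τB : ℝ → ℝ,
    (∀ q : ℝ, 0 ≤ q → ∀ i ∈ A, HasLq1 (projMeas μ i) q (τA q)) ∧
    (∀ q : ℝ, 0 ≤ q → ∀ i ∈ B, HasLq1 (projMeas μ i) q (τB q)) ∧
    ∀ v : V, ((v, false) ∈ A ∧ (v, true) ∈ B) ∨ ((v, false) ∈ B ∧ (v, true) ∈ A)

end LqGIFS

end

open LqGIFS MeasureTheory Filter Set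

/-!
An edge `e` carries an affine copy of a coordinate projection of `μ_{t(e)}` that is dominated by a
multiple of a projection of `μ_{i(e)}`, so the exponent of the former is at most that of the latter.
Both pairs of exponents have the sum `t(q)`, hence the inequalities are equalities and the
exponents are transported along admissible words. Therefore
`φ^{s,q}(w) = p_w^q c_w^{τx (i w)} d_w^{τy (i w)} α₂(w)^{s - t(q)}`,
where the factor in front of the power of `α₂` is multiplicative along paths while `α₂` is
supermultiplicative: `φ^{s,q}` is submultiplicative for `s ≤ t(q)` and supermultiplicative along
paths for `s ≥ t(q)`. The norm of `A_k^{s,q}` is the sum of `φ^{s,q}` over the admissible words of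
length `k`. In the supermultiplicative case, a proportion `1 / (#V)²` of the product of two such
sums comes from pairs of words with a common terminal and initial vertex `(v, v')`, which are
joined by a fixed word from `v` to `v'`.
-/

namespace LqGIFS

open scoped ENNReal NNReal Topology

/-! ### Moment sums on the line and affine copies -/

/-- The power `x ^ q` with the convention `0 ^ q = 0` for every `q`, under which the moment sums
at `q = 0` count only the mesh cubes of positive measure. -/
noncomputable def momentPow (q : ℝ) (x : ℝ≥0∞) : ℝ≥0∞ := if x = 0 then 0 else x ^ q

lemma momentPow_zero (q : ℝ) : momentPow q 0 = 0 := if_pos rfl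

lemma momentPow_mono {q : ℝ} (hq : 0 ≤ q) : Monotone (momentPow q) := by
  intro x y hxy
  by_cases hx : x = 0
  · simp [hx, momentPow_zero]
  · have hy : y ≠ 0 := fun hy => hx (by simpa [hy] using hxy)
    simpa [momentPow, hx, hy] using ENNReal.rpow_le_rpow hxy hq

lemma momentPow_mul_le {q : ℝ} (hq : 0 ≤ q) (a x : ℝ≥0∞) :
    momentPow q (a * x) ≤ a ^ q * momentPow q x := by
  by_cases hx : x = 0
  · simp [hx, momentPow_zero]
  · rw [← show x ^ q = momentPow q x by simp [momentPow, hx], ← ENNReal.mul_rpow_of_nonneg _ _ hq]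
    unfold momentPow
    split_ifs <;> simp

lemma momentPow_add_le {q : ℝ} (hq : 0 ≤ q) (x y : ℝ≥0∞) :
    momentPow q (x + y) ≤ 2 ^ q * (momentPow q x + momentPow q y) := by
  wlog hxy : x ≤ y generalizing x y
  · simpa only [add_comm] using this y x (le_of_not_ge hxy)
  calc momentPow q (x + y) ≤ momentPow q (2 * y) :=
        momentPow_mono hq (by rw [two_mul]; gcongr)
    _ ≤ 2 ^ q * momentPow q y := momentPow_mul_le hq 2 y
    _ ≤ 2 ^ q * (momentPow q x + momentPow q y) := by gcongr; exact le_add_self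

lemma momentPow_ne_top {x : ℝ≥0∞} (hx : x ≠ ∞) (q : ℝ) : momentPow q x ≠ ∞ := by
  unfold momentPow
  split_ifs with h0
  · exact ENNReal.zero_ne_top
  · exact ENNReal.rpow_ne_top_of_ne_zero h0 hx

/-- The moment sum `Dq1` as an extended nonnegative real, which needs no summability. -/
noncomputable def meshMoment (ν : Measure ℝ) (δ q : ℝ) : ℝ≥0∞ :=
  ∑' k : ℤ, momentPow q (ν (meshCube1 δ k))

lemma Dq1_eq_toReal_meshMoment (ν : Measure ℝ) [IsFiniteMeasure ν] (δ q : ℝ) :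
    Dq1 ν δ q = (meshMoment ν δ q).toReal := by
  rw [meshMoment, ENNReal.tsum_toReal_eq fun k => momentPow_ne_top (measure_ne_top ν _) q]
  refine tsum_congr fun k => ?_
  by_cases h0 : ν (meshCube1 δ k) = 0 <;> simp [momentPow, h0, ENNReal.toReal_rpow]

lemma meshMoment_ne_top {ν : Measure ℝ} [IsFiniteMeasure ν] {R : ℝ} (hν : ∀ᵐ x ∂ν, |x| ≤ R)
    {δ : ℝ} (hδ : 0 < δ) (q : ℝ) : meshMoment ν δ q ≠ ∞ := by
  have hnull : ∀ k ∉ Finset.Icc (⌊-R / δ⌋ - 1) ⌈R / δ⌉, ν (meshCube1 δ k) = 0 := by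
    refine fun k hk => measure_mono_null ?_ (ae_iff.1 hν)
    refine fun x hx hxR => hk ?_
    obtain ⟨hx_ge, hx_le⟩ := hx
    obtain ⟨hR_ge, hR_le⟩ := abs_le.1 hxR
    have hk_le : (k : ℝ) ≤ R / δ := by rw [le_div_iff₀ hδ]; linarith
    have hk_ge : -R / δ ≤ ((k + 1 : ℤ) : ℝ) := by rw [div_le_iff₀ hδ]; push_cast; linarith
    rw [Finset.mem_Icc, sub_le_iff_le_add]
    exact ⟨Int.cast_le.1 ((Int.floor_le _).trans hk_ge),
      Int.cast_le.1 (hk_le.trans (Int.le_ceil _))⟩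
  rw [meshMoment, tsum_eq_sum fun k hk => by rw [hnull k hk, momentPow_zero]]
  exact ENNReal.sum_ne_top.2 fun k _ => momentPow_ne_top (measure_ne_top ν _) q

lemma iUnion_meshCube1 {δ : ℝ} (hδ : 0 < δ) : ⋃ k : ℤ, meshCube1 δ k = univ :=
  eq_univ_of_forall fun x => mem_iUnion.2
    ⟨⌊x / δ⌋, (le_div_iff₀ hδ).1 (Int.floor_le _), ((div_lt_iff₀ hδ).1 (Int.lt_floor_add_one _)).le⟩

lemma meshMoment_ne_zero {ν : Measure ℝ} [IsFiniteMeasure ν] [NeZero ν] {δ : ℝ} (hδ : 0 < δ)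
    (q : ℝ) : meshMoment ν δ q ≠ 0 := by
  intro h0
  refine NeZero.ne ν (Measure.measure_univ_eq_zero.1 ?_)
  rw [← iUnion_meshCube1 hδ]
  refine measure_iUnion_null fun k => by_contra fun hk => ?_
  have hterm := ENNReal.tsum_eq_zero.1 h0 k
  rw [momentPow, if_neg hk, ENNReal.rpow_eq_zero_iff] at hterm
  simp [hk] at hterm

lemma meshMoment_le_of_le_smul {ν ν' : Measure ℝ} {C : ℝ≥0∞} (h : ν' ≤ C • ν) {q : ℝ}
    (hq : 0 ≤ q) (δ : ℝ) : meshMoment ν' δ q ≤ C ^ q * meshMoment ν δ q := by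
  rw [meshMoment, meshMoment, ← ENNReal.tsum_mul_left]
  exact ENNReal.tsum_le_tsum fun k =>
    (momentPow_mono hq (h (meshCube1 δ k))).trans (momentPow_mul_le hq _ _)

lemma Icc_add_subset_meshCube1_union {δ : ℝ} (hδ : 0 < δ) (y : ℝ) :
    Icc y (y + δ) ⊆ meshCube1 δ ⌊y / δ⌋ ∪ meshCube1 δ (⌊y / δ⌋ + 1) := by
  rintro x ⟨hyx, hxy⟩
  have hfloor_le : (⌊y / δ⌋ : ℝ) * δ ≤ y := (le_div_iff₀ hδ).1 (Int.floor_le _)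
  have hlt_floor : y < (⌊y / δ⌋ + 1) * δ := (div_lt_iff₀ hδ).1 (Int.lt_floor_add_one _)
  rcases le_total x ((⌊y / δ⌋ + 1) * δ) with hx | hx
  · exact Or.inl ⟨hfloor_le.trans hyx, hx⟩
  · exact Or.inr ⟨by push_cast; exact hx, by push_cast; linarith⟩

lemma exists_injective_meshCube1_subset_preimage_affine {c δ : ℝ} (hc : c ≠ 0) (hδ : 0 < δ)
    (t : ℝ) : ∃ m : ℤ → ℤ, Function.Injective m ∧ ∀ k, meshCube1 (δ / |c|) k ⊆
      (fun x => c * x + t) ⁻¹' (meshCube1 δ (m k) ∪ meshCube1 δ (m k + 1)) := by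
  have habs : 0 < |c| := abs_pos.2 hc
  have hscale : ∀ k x, x ∈ meshCube1 (δ / |c|) k → k * δ ≤ |c| * x ∧ |c| * x ≤ (k + 1) * δ := by
    rintro k x ⟨hx_ge, hx_le⟩
    rw [← mul_div_assoc] at hx_ge hx_le
    exact ⟨(div_le_iff₀' habs).1 hx_ge, (le_div_iff₀' habs).1 hx_le⟩
  have hfloor : ∀ n : ℤ, ⌊(n * δ + t) / δ⌋ = n + ⌊t / δ⌋ := fun n => by
    rw [add_div, mul_div_cancel_right₀ _ hδ.ne', Int.floor_intCast_add]
  rcases abs_choice c with hsign | hsign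
  · refine ⟨fun k => ⌊(k * δ + t) / δ⌋, fun i j hij => by simpa [hfloor] using hij,
      fun k x hx => Icc_add_subset_meshCube1_union hδ _ ?_⟩
    obtain ⟨hx_ge, hx_le⟩ := hscale k x hx
    rw [hsign] at hx_ge hx_le
    constructor <;> linarith
  · refine ⟨fun k => ⌊((-(k + 1) : ℤ) * δ + t) / δ⌋,
      fun i j hij => by simpa only [hfloor, add_left_inj, neg_inj] using hij,
      fun k x hx => Icc_add_subset_meshCube1_union hδ _ ?_⟩
    obtain ⟨hx_ge, hx_le⟩ := hscale k x hx
    rw [hsign] at hx_ge hx_le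
    push_cast
    constructor <;> linarith

lemma meshMoment_div_abs_le_map_affine (ν : Measure ℝ) {c δ q : ℝ} (hc : c ≠ 0) (hδ : 0 < δ)
    (hq : 0 ≤ q) (t : ℝ) :
    meshMoment ν (δ / |c|) q ≤ 2 ^ q * 2 * meshMoment (ν.map fun x => c * x + t) δ q := by
  obtain ⟨m, hm, hcover⟩ := exists_injective_meshCube1_subset_preimage_affine hc hδ t
  have hmeas : Measurable fun x : ℝ => c * x + t := by fun_prop
  set ρ := ν.map fun x => c * x + t
  have hterm : ∀ k, ν (meshCube1 (δ / |c|) k) ≤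
      ρ (meshCube1 δ (m k)) + ρ (meshCube1 δ (m k + 1)) := fun k =>
    calc ν (meshCube1 (δ / |c|) k)
        ≤ ρ (meshCube1 δ (m k) ∪ meshCube1 δ (m k + 1)) :=
          (measure_mono (hcover k)).trans (Measure.le_map_apply hmeas.aemeasurable _)
      _ ≤ _ := measure_union_le _ _
  have hm_succ : Function.Injective fun k => m k + 1 := fun i j hij => hm (by simpa using hij)
  calc meshMoment ν (δ / |c|) q
      ≤ ∑' k, 2 ^ q * (momentPow q (ρ (meshCube1 δ (m k))) +
          momentPow q (ρ (meshCube1 δ (m k + 1)))) :=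
        ENNReal.tsum_le_tsum fun k => (momentPow_mono hq (hterm k)).trans (momentPow_add_le hq _ _)
    _ ≤ 2 ^ q * (meshMoment ρ δ q + meshMoment ρ δ q) := by
        rw [ENNReal.tsum_mul_left, ENNReal.tsum_add]
        gcongr
        · exact ENNReal.tsum_comp_le_tsum_of_injective hm fun k => momentPow q (ρ (meshCube1 δ k))
        · exact ENNReal.tsum_comp_le_tsum_of_injective hm_succ
            fun k => momentPow q (ρ (meshCube1 δ k))
    _ = 2 ^ q * 2 * meshMoment ρ δ q := by rw [← two_mul, mul_assoc]

lemma tendsto_div_const_nhdsGT_zero {a : ℝ} (ha : 0 < a) :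
    Tendsto (fun δ : ℝ => δ / a) (𝓝[>] 0) (𝓝[>] 0) := by
  refine tendsto_nhdsWithin_iff.2 ⟨?_, ?_⟩
  · simpa using ((tendsto_id (α := ℝ) (x := 𝓝 0)).div_const a).mono_left nhdsWithin_le_nhds
  · filter_upwards [self_mem_nhdsWithin] with δ hδ using div_pos hδ ha

lemma tendsto_neg_log_nhdsGT_zero :
    Tendsto (fun δ : ℝ => -Real.log δ) (𝓝[>] 0) atTop :=
  tendsto_neg_atBot_atTop.comp Real.tendsto_log_nhdsGT_zero

lemma tendsto_neg_log_div_const_div_neg_log {a : ℝ} (ha : 0 < a) :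
    Tendsto (fun δ : ℝ => -Real.log (δ / a) / -Real.log δ) (𝓝[>] 0) (𝓝 1) := by
  have hlim : Tendsto (fun δ : ℝ => 1 + Real.log a / -Real.log δ) (𝓝[>] 0) (𝓝 1) := by
    simpa using (tendsto_neg_log_nhdsGT_zero.const_div_atTop (Real.log a)).const_add 1
  refine hlim.congr' ?_
  filter_upwards [self_mem_nhdsWithin, tendsto_neg_log_nhdsGT_zero.eventually_gt_atTop 0]
    with δ hδ hlog
  rw [Real.log_div (ne_of_gt hδ) ha.ne', neg_sub, sub_eq_neg_add, add_div, div_self hlog.ne']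

lemma HasLq1.le_of_Dq1_div_const_le {ν ν' : Measure ℝ} {q τ τ' a K : ℝ} (hτ : HasLq1 ν q τ)
    (hτ' : HasLq1 ν' q τ') (ha : 0 < a) (hpos : ∀ δ, 0 < δ → 0 < Dq1 ν' δ q)
    (hle : ∀ δ, 0 < δ → Dq1 ν' (δ / a) q ≤ K * Dq1 ν δ q) : τ' ≤ τ := by
  have hleft := (hτ'.comp (tendsto_div_const_nhdsGT_zero ha)).mul
    (tendsto_neg_log_div_const_div_neg_log ha)
  have hright := (tendsto_neg_log_nhdsGT_zero.const_div_atTop (Real.log K)).add hτ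
  rw [mul_one] at hleft
  rw [zero_add] at hright
  refine le_of_tendsto_of_tendsto hleft hright ?_
  filter_upwards [self_mem_nhdsWithin, tendsto_neg_log_nhdsGT_zero.eventually_gt_atTop 0,
    (tendsto_neg_log_nhdsGT_zero.comp (tendsto_div_const_nhdsGT_zero ha)).eventually_gt_atTop 0]
    with δ (hδ : 0 < δ) hlog hlog'
  have hD' := hpos (δ / a) (div_pos hδ ha)
  obtain ⟨hK, hD⟩ := mul_ne_zero_iff.1 (hD'.trans_le (hle δ hδ)).ne'
  calc _ = Real.log (Dq1 ν' (δ / a) q) / -Real.log δ := div_mul_div_cancel₀ hlog'.ne'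
    _ ≤ Real.log (K * Dq1 ν δ q) / -Real.log δ := by
        gcongr
        exact hle δ hδ
    _ = Real.log K / -Real.log δ + Real.log (Dq1 ν δ q) / -Real.log δ := by
        rw [Real.log_mul hK hD, add_div]

lemma HasLq1.le_of_map_affine_le_smul {ν ν' : Measure ℝ} [IsFiniteMeasure ν] [IsFiniteMeasure ν']
    [NeZero ν'] {R R' : ℝ} (hν : ∀ᵐ x ∂ν, |x| ≤ R) (hν' : ∀ᵐ x ∂ν', |x| ≤ R')
    {c t q τ τ' : ℝ} {C : ℝ≥0∞} (hc : c ≠ 0) (hC : C ≠ ∞) (hq : 0 ≤ q)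
    (h : (ν'.map fun x => c * x + t) ≤ C • ν) (hτ : HasLq1 ν q τ) (hτ' : HasLq1 ν' q τ') :
    τ' ≤ τ := by
  refine hτ.le_of_Dq1_div_const_le (K := (2 ^ q * 2 * C ^ q).toReal) hτ' (abs_pos.2 hc)
    (fun δ hδ => ?_) fun δ hδ => ?_
  · rw [Dq1_eq_toReal_meshMoment]
    exact ENNReal.toReal_pos (meshMoment_ne_zero hδ q) (meshMoment_ne_top hν' hδ q)
  · have hbound : meshMoment ν' (δ / |c|) q ≤ 2 ^ q * 2 * C ^ q * meshMoment ν δ q := by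
      rw [mul_assoc _ (C ^ q)]
      refine (meshMoment_div_abs_le_map_affine ν' hc hδ hq t).trans ?_
      gcongr
      exact meshMoment_le_of_le_smul h hq δ
    have hK : (2 : ℝ≥0∞) ^ q * 2 * C ^ q ≠ ∞ := by finiteness
    rw [Dq1_eq_toReal_meshMoment, Dq1_eq_toReal_meshMoment, ← ENNReal.toReal_mul]
    exact ENNReal.toReal_mono (ENNReal.mul_ne_top hK (meshMoment_ne_top hν hδ q)) hbound

/-! ### Sums over words of a given length -/

section WordSum

/-- The sum of `F` over all words of length `k` on the alphabet `E`. -/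
def wordSum {E : Type*} [Fintype E] (F : List E → ℝ) (k : ℕ) : ℝ :=
  ∑ f : Fin k → E, F (List.ofFn f)

variable {E : Type*} [Fintype E] {F : List E → ℝ}

lemma wordSum_add (F : List E → ℝ) (k l : ℕ) :
    wordSum F (k + l) = wordSum (fun u => wordSum (fun w => F (u ++ w)) l) k := by
  simp only [wordSum]
  rw [← Fintype.sum_prod_type', ← (Fin.appendEquiv k l).sum_comp]
  simp [Fin.appendEquiv, List.ofFn_fin_append]

lemma mul_wordSum (c : ℝ) (F : List E → ℝ) (k : ℕ) :
    c * wordSum F k = wordSum (fun w => c * F w) k := by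
  simp only [wordSum, Finset.mul_sum]

lemma wordSum_mono {F G : List E → ℝ} {k : ℕ} (hk : k ≠ 0) (h : ∀ w ≠ [], F w ≤ G w) :
    wordSum F k ≤ wordSum G k :=
  Finset.sum_le_sum fun _ _ => h _ (mt List.ofFn_eq_nil_iff.1 hk)

lemma le_wordSum_length (hF : ∀ w, 0 ≤ F w) (w : List E) : F w ≤ wordSum F w.length := by
  simpa [wordSum] using Finset.single_le_sum (f := fun f : Fin w.length → E => F (List.ofFn f))
    (fun f _ => hF _) (Finset.mem_univ w.get)

lemma wordSum_add_le {k l : ℕ} (hk : k ≠ 0) (hl : l ≠ 0)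
    (h : ∀ u w, u ≠ [] → w ≠ [] → F (u ++ w) ≤ F u * F w) :
    wordSum F (k + l) ≤ wordSum F k * wordSum F l := by
  rw [wordSum_add, mul_comm, mul_wordSum]
  refine wordSum_mono hk fun u hu => ?_
  rw [mul_comm, mul_wordSum]
  exact wordSum_mono hl fun w hw => h u w hu hw

lemma sum_append_append_le_wordSum (hF : ∀ w, 0 ≤ F w) (g : List E) (k l : ℕ)
    (A : Finset ((Fin k → E) × (Fin l → E))) :
    ∑ x ∈ A, F (List.ofFn x.1 ++ g ++ List.ofFn x.2) ≤ wordSum F (k + g.length + l) := by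
  calc ∑ x ∈ A, F (List.ofFn x.1 ++ g ++ List.ofFn x.2)
      ≤ ∑ x : (Fin k → E) × (Fin l → E), F (List.ofFn x.1 ++ g ++ List.ofFn x.2) :=
        Finset.sum_le_univ_sum_of_nonneg fun x => hF _
    _ = wordSum (fun u => wordSum (fun w => F (u ++ g ++ w)) l) k := Fintype.sum_prod_type _
    _ ≤ wordSum (fun u => wordSum (fun h => wordSum (fun w => F (u ++ h ++ w)) l) g.length) k :=
        Finset.sum_le_sum fun u _ =>
          le_wordSum_length (F := fun h => wordSum (fun w => F (List.ofFn u ++ h ++ w)) l)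
            (fun h => Finset.sum_nonneg fun w _ => hF _) g
    _ = wordSum F (k + g.length + l) := by rw [wordSum_add F, wordSum_add _ k]

end WordSum

/-! ### The coordinate projections of the graph-directed measures -/

/-- The coordinate of the plane on the axis `i`, indexed as in `projMeas`: `false` is the first
axis and `true` the second. -/
def coord (i : Bool) : ℝ × ℝ → ℝ := if i then Prod.snd else Prod.fst

lemma measurable_coord (i : Bool) : Measurable (coord i) := by
  cases i
  exacts [measurable_fst, measurable_snd]

lemma abs_coord_le_norm (i : Bool) (z : ℝ × ℝ) : |coord i z| ≤ ‖z‖ := by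
  cases i
  exacts [norm_fst_le z, norm_snd_le z]

lemma norm_le_of_forall_abs_coord_le {z : ℝ × ℝ} {M : ℝ} (h : ∀ i, |coord i z| ≤ M) : ‖z‖ ≤ M :=
  norm_prod_le_iff.2 ⟨h false, h true⟩

lemma projMeas_eq_map_coord {V : Type*} (μ : V → Measure (ℝ × ℝ)) (v : V) (i : Bool) :
    projMeas μ (v, i) = (μ v).map (coord i) := by
  cases i <;> rfl

/-- The exponents of the two coordinate projections as a single family, indexed as in
`projMeas`. -/
def axisTau {V : Type*} (τx τy : V → ℝ) (j : V × Bool) : ℝ := if j.2 then τy j.1 else τx j.1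

lemma axisTau_add_axisTau_not {V : Type*} (τx τy : V → ℝ) (v : V) (i : Bool) :
    axisTau τx τy (v, i) + axisTau τx τy (v, !i) = τx v + τy v := by
  cases i
  exacts [rfl, add_comm _ _]

lemma hasLq1_projMeas {V : Type*} {μ : V → Measure (ℝ × ℝ)} {q : ℝ} {τx τy : V → ℝ}
    (hτx : ∀ v, HasLq1 ((μ v).map Prod.fst) q (τx v))
    (hτy : ∀ v, HasLq1 ((μ v).map Prod.snd) q (τy v)) :
    ∀ j, HasLq1 (projMeas μ j) q (axisTau τx τy j)
  | (v, false) => hτx v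
  | (v, true) => hτy v

lemma bool_beq_assoc (i j k : Bool) : ((i == j) == k) = (i == (j == k)) := by
  cases i <;> cases j <;> cases k <;> rfl

namespace BoxLikeGIFS

variable {V E : Type*} (S : BoxLikeGIFS V E)

/-- The signed contraction ratio of `ψ_e` onto the image axis `i`. -/
def ratio (e : E) (i : Bool) : ℝ := if i then S.sb e * S.b e else S.sa e * S.a e

lemma ratio_ne_zero (e : E) (i : Bool) : S.ratio e i ≠ 0 := by
  have ha := (S.a_mem e).1.ne'
  have hb := (S.b_mem e).1.ne'
  rcases S.sa_mem e with h | h <;> rcases S.sb_mem e with h' | h' <;> cases i <;>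
    simp [ratio, h, h', ha, hb]

lemma abs_ratio_lt_one (e : E) (i : Bool) : |S.ratio e i| < 1 := by
  have ha := abs_lt.2 ⟨by linarith [(S.a_mem e).1], (S.a_mem e).2⟩
  have hb := abs_lt.2 ⟨by linarith [(S.b_mem e).1], (S.b_mem e).2⟩
  rcases S.sa_mem e with h | h <;> rcases S.sb_mem e with h' | h' <;> cases i <;>
    simpa [ratio, h, h'] using ‹_›

lemma coord_map (e : E) (i : Bool) (z : ℝ × ℝ) :
    coord i (S.map e z) = S.ratio e i * coord (i == S.diag e) z + coord i (S.trans e) := by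
  rcases hd : S.diag e <;> cases i <;> simp [map, coord, ratio, hd]

lemma measurable_map (e : E) : Measurable (S.map e) := by
  unfold map
  split_ifs <;> fun_prop

lemma exists_norm_map_le [Finite E] :
    ∃ r T : ℝ, 0 ≤ r ∧ r < 1 ∧ ∀ e z, ‖S.map e z‖ ≤ r * ‖z‖ + T := by
  have := Fintype.ofFinite E
  let r : ℝ≥0 := Finset.univ.sup fun x : E × Bool => ‖S.ratio x.1 x.2‖₊
  let T : ℝ≥0 := Finset.univ.sup fun e => ‖S.trans e‖₊
  have hr : r < 1 := (Finset.sup_lt_iff zero_lt_one).2 fun x _ => S.abs_ratio_lt_one x.1 x.2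
  have hratio : ∀ e i, |S.ratio e i| ≤ r := fun e i =>
    Finset.le_sup (f := fun x : E × Bool => ‖S.ratio x.1 x.2‖₊) (Finset.mem_univ (e, i))
  have htrans : ∀ e, ‖S.trans e‖ ≤ T := fun e =>
    Finset.le_sup (f := fun e => ‖S.trans e‖₊) (Finset.mem_univ e)
  refine ⟨r, T, r.2, hr, fun e z => norm_le_of_forall_abs_coord_le fun i => ?_⟩
  calc |coord i (S.map e z)|
      ≤ |S.ratio e i| * |coord (i == S.diag e) z| + |coord i (S.trans e)| := by
        rw [coord_map, ← abs_mul]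
        exact abs_add_le _ _
    _ ≤ r * ‖z‖ + T := by
        gcongr
        exacts [hratio e i, abs_coord_le_norm _ z, (abs_coord_le_norm i _).trans (htrans e)]

section GDMeasure

variable {S} [Fintype E] {p : E → ℝ} {μ : V → Measure (ℝ × ℝ)}

lemma IsGDMeasure.map_le_smul (hμ : S.IsGDMeasure p μ) {e : E} (he : 0 < p e) :
    (μ (S.term e)).map (S.map e) ≤ (ENNReal.ofReal (p e))⁻¹ • μ (S.init e) := by
  have hle : ENNReal.ofReal (p e) • (μ (S.term e)).map (S.map e) ≤ μ (S.init e) := by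
    rw [hμ.2 (S.init e)]
    refine le_of_eq_of_le ?_ (Finset.single_le_sum (fun _ _ => Measure.zero_le _)
      (Finset.mem_univ e))
    rw [if_pos rfl]
  intro A
  rw [Measure.smul_apply, smul_eq_mul, mul_comm, ← div_eq_mul_inv,
    ENNReal.le_div_iff_mul_le (Or.inl (by simpa using he)) (Or.inl ENNReal.ofReal_ne_top), mul_comm]
  exact hle A

lemma IsGDMeasure.map_projMeas_le_smul (hμ : S.IsGDMeasure p μ) {e : E} (he : 0 < p e)
    (i : Bool) :
    ((projMeas μ (S.term e, i == S.diag e)).map fun x => S.ratio e i * x + coord i (S.trans e)) ≤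
      (ENNReal.ofReal (p e))⁻¹ • projMeas μ (S.init e, i) := by
  rw [projMeas_eq_map_coord, projMeas_eq_map_coord,
    Measure.map_map (by fun_prop) (measurable_coord _)]
  have hcoord : (fun x => S.ratio e i * x + coord i (S.trans e)) ∘ coord (i == S.diag e) =
      coord i ∘ S.map e := funext fun z => (S.coord_map e i z).symm
  rw [hcoord, ← Measure.map_map (measurable_coord i) (S.measurable_map e), ← Measure.map_smul]
  exact Measure.map_mono (hμ.map_le_smul he) (measurable_coord i)

lemma IsGDMeasure.measure_le_of_forall_edge (hμ : S.IsGDMeasure p μ) (hp : S.IsWeights p)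
    {A : Set (ℝ × ℝ)} (hA : MeasurableSet A) {C : ℝ≥0∞}
    (h : ∀ e, μ (S.term e) (S.map e ⁻¹' A) ≤ C) (v : V) : μ v A ≤ C := by
  calc μ v A = ∑ e, ENNReal.ofReal (if S.init e = v then p e else 0) *
          μ (S.term e) (S.map e ⁻¹' A) := by
        conv_lhs => rw [hμ.2 v, Measure.finsetSum_apply]
        refine Finset.sum_congr rfl fun e _ => ?_
        split_ifs <;> simp [Measure.map_apply (S.measurable_map e) hA]
    _ ≤ ∑ e, ENNReal.ofReal (if S.init e = v then p e else 0) * C := by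
        gcongr with e
        exact h e
    _ = C := by
        rw [← Finset.sum_mul, ← ENNReal.ofReal_sum_of_nonneg, hp.2 v, ENNReal.ofReal_one, one_mul]
        intro e _
        split_ifs
        exacts [(hp.1 e).le, le_rfl]

lemma IsGDMeasure.measure_lt_norm_le [Fintype V] (hμ : S.IsGDMeasure p μ) (hp : S.IsWeights p)
    {r T : ℝ} (hr₀ : 0 ≤ r) (hr₁ : r < 1) (hmap : ∀ e z, ‖S.map e z‖ ≤ r * ‖z‖ + T) (n : ℕ) :
    ∀ R, (T + 1) / (1 - r) ≤ R →
      ∀ v, μ v {z | R < ‖z‖} ≤ (∑ u, μ u) {z | R + n < ‖z‖} := by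
  induction n with
  | zero =>
    intro R _ v
    rw [Nat.cast_zero, add_zero]
    exact Finset.single_le_sum (f := μ) (fun _ _ => Measure.zero_le _) (Finset.mem_univ v) _
  | succ n ih =>
    intro R hR v
    refine hμ.measure_le_of_forall_edge hp (measurableSet_lt measurable_const measurable_norm)
      (fun e => ?_) v
    have hsub : S.map e ⁻¹' {z | R < ‖z‖} ⊆ {z | R + 1 < ‖z‖} := by
      intro z (hz : R < ‖S.map e z‖)
      rw [div_le_iff₀ (sub_pos.2 hr₁)] at hR
      by_contra hz'
      have hrz := mul_le_mul_of_nonneg_left (not_lt.1 hz') hr₀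
      linarith [hmap e z]
    calc μ (S.term e) (S.map e ⁻¹' {z | R < ‖z‖})
        ≤ μ (S.term e) {z | R + 1 < ‖z‖} := measure_mono hsub
      _ ≤ (∑ u, μ u) {z | R + 1 + n < ‖z‖} := ih (R + 1) (by linarith) _
      _ = (∑ u, μ u) {z | R + (n + 1 : ℕ) < ‖z‖} := by
          rw [Nat.cast_add_one, add_assoc, add_comm (1 : ℝ)]

lemma IsGDMeasure.exists_ae_norm_le [Finite V] (hμ : S.IsGDMeasure p μ) (hp : S.IsWeights p) :
    ∃ R : ℝ, ∀ v, ∀ᵐ z ∂μ v, ‖z‖ ≤ R := by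
  have := Fintype.ofFinite V
  have := hμ.1
  obtain ⟨r, T, hr₀, hr₁, hmap⟩ := S.exists_norm_map_le
  set R := (T + 1) / (1 - r)
  refine ⟨R, fun v => ?_⟩
  have htail : Tendsto (fun n : ℕ => (∑ u, μ u) {z | R + n < ‖z‖}) atTop (𝓝 0) := by
    have htight := tendsto_measure_norm_gt_of_isTightMeasureSet
      (isTightMeasureSet_singleton (μ := ∑ u, μ u))
    simp only [mem_singleton_iff, iSup_iSup_eq_left] at htight
    exact htight.comp (tendsto_atTop_add_const_left _ R tendsto_natCast_atTop_atTop)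
  have hnull := ge_of_tendsto' htail fun n =>
    hμ.measure_lt_norm_le hp hr₀ hr₁ hmap n R le_rfl v
  simpa [ae_iff] using hnull

lemma IsGDMeasure.axisTau_term_le [Finite V] (hμ : S.IsGDMeasure p μ) (hp : S.IsWeights p)
    {q : ℝ} (hq : 0 ≤ q) {τx τy : V → ℝ}
    (hτ : ∀ j, HasLq1 (projMeas μ j) q (axisTau τx τy j)) (e : E) (i : Bool) :
    axisTau τx τy (S.term e, i == S.diag e) ≤ axisTau τx τy (S.init e, i) := by
  have := hμ.1
  have hprob : ∀ j, IsProbabilityMeasure (projMeas μ j) := fun (v, i) => by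
    rw [projMeas_eq_map_coord]
    exact Measure.isProbabilityMeasure_map (measurable_coord i).aemeasurable
  obtain ⟨R, hR⟩ := hμ.exists_ae_norm_le hp
  have hbdd : ∀ j, ∀ᵐ x ∂projMeas μ j, |x| ≤ R := fun (v, i) => by
    rw [projMeas_eq_map_coord, ae_map_iff (measurable_coord i).aemeasurable
      (measurableSet_le continuous_abs.measurable measurable_const)]
    filter_upwards [hR v] with z hz using (abs_coord_le_norm i z).trans hz
  exact (hτ _).le_of_map_affine_le_smul (hbdd _) (hbdd _) (S.ratio_ne_zero e i)
    (ENNReal.inv_ne_top.2 (by simpa using hp.1 e)) hq (hμ.map_projMeas_le_smul (hp.1 e) i) (hτ _)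

end GDMeasure

/-- The axis exponents are invariant along the edges, up to the exchange of the axes made by an
anti-diagonal `T_e`. -/
def TauInvariant (τx τy : V → ℝ) : Prop :=
  ∀ e i, axisTau τx τy (S.term e, i == S.diag e) = axisTau τx τy (S.init e, i)

lemma tauInvariant_of_le {τx τy : V → ℝ} {tq : ℝ} (htq : ∀ v, τx v + τy v = tq)
    (h : ∀ e i, axisTau τx τy (S.term e, i == S.diag e) ≤ axisTau τx τy (S.init e, i)) :
    S.TauInvariant τx τy := by
  intro e i
  have hi' := h e !i
  rw [show ((!i) == S.diag e) = !(i == S.diag e) by cases i <;> cases S.diag e <;> rfl] at hi'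
  linarith [h e i, axisTau_add_axisTau_not τx τy (S.init e) i, htq (S.init e), htq (S.term e),
    axisTau_add_axisTau_not τx τy (S.term e) (i == S.diag e)]
/-! ### Words -/

section Words

lemma wordProb_append (p : E → ℝ) (u w : List E) :
    wordProb p (u ++ w) = wordProb p u * wordProb p w := by
  simp [wordProb]

lemma wordProb_pos {p : E → ℝ} (hp : ∀ e, 0 < p e) (w : List E) : 0 < wordProb p w :=
  List.prod_pos <| by simpa using fun e _ => hp e

/-- The side length of the rectangle `ψ_w([0,1]²)` along the axis `i`. -/
def wordSide (w : List E) (i : Bool) : ℝ := if i then (S.wdims w).2 else (S.wdims w).1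

lemma wordSide_nil (i : Bool) : S.wordSide [] i = 1 := by
  cases i <;> rfl

lemma wordSide_cons (e : E) (w : List E) (i : Bool) :
    S.wordSide (e :: w) i = S.wordSide [e] i * S.wordSide w (i == S.diag e) := by
  rcases hd : S.diag e <;> cases i <;> simp [wordSide, wdims, hd]

lemma wordSide_pos (w : List E) (i : Bool) : 0 < S.wordSide w i := by
  induction w generalizing i with
  | nil => simp [wordSide_nil]
  | cons e w ih =>
    rw [wordSide_cons]
    refine mul_pos ?_ (ih _)
    rcases hd : S.diag e <;> cases i <;> simp [wordSide, wdims, hd, (S.a_mem e).1, (S.b_mem e).1]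

lemma wordSide_append (u w : List E) (i : Bool) :
    S.wordSide (u ++ w) i = S.wordSide u i * S.wordSide w (i == S.wordDiag u) := by
  induction u generalizing i with
  | nil => simp [wordSide_nil, wordDiag]
  | cons e u ih =>
    rw [List.cons_append, wordSide_cons, ih, bool_beq_assoc, wordSide_cons _ _ u, wordDiag,
      mul_assoc]

lemma le_alpha2 {x : ℝ} {w : List E} (h : ∀ i, x ≤ S.wordSide w i) : x ≤ S.alpha2 w :=
  le_min (h false) (h true)

lemma alpha2_le_wordSide (w : List E) (i : Bool) : S.alpha2 w ≤ S.wordSide w i := by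
  cases i
  exacts [min_le_left _ _, min_le_right _ _]

lemma alpha2_pos (w : List E) : 0 < S.alpha2 w :=
  lt_min (S.wordSide_pos w false) (S.wordSide_pos w true)

lemma alpha2_mul_le_append (u w : List E) : S.alpha2 u * S.alpha2 w ≤ S.alpha2 (u ++ w) := by
  refine S.le_alpha2 fun i => ?_
  rw [wordSide_append]
  exact mul_le_mul (S.alpha2_le_wordSide u i) (S.alpha2_le_wordSide w _) (S.alpha2_pos w).le
    (S.wordSide_pos u i).le

variable [Nonempty V]

lemma wordInit_append {u : List E} (hu : u ≠ []) (w : List E) :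
    S.wordInit (u ++ w) = S.wordInit u := by
  rw [wordInit, List.head?_append_of_ne_nil u hu, wordInit]

lemma wordTerm_append (u : List E) {w : List E} (hw : w ≠ []) :
    S.wordTerm (u ++ w) = S.wordTerm w := by
  rw [wordTerm, List.getLast?_append_of_ne_nil u hw, wordTerm]

lemma admissible_append_iff {u w : List E} (hu : u ≠ []) (hw : w ≠ []) :
    S.Admissible (u ++ w) ↔ S.Admissible u ∧ S.Admissible w ∧ S.wordTerm u = S.wordInit w := by
  have hterm : S.wordTerm u = S.term (u.getLast hu) := by
    simp [wordTerm, List.getLast?_eq_some_getLast hu]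
  have hinit : S.wordInit w = S.init (w.head hw) := by
    simp [wordInit, List.head?_eq_some_head hw]
  rw [hterm, hinit]
  refine List.isChain_append.trans (and_congr Iff.rfl (and_congr Iff.rfl ?_))
  simp [List.getLast?_eq_some_getLast hu, List.head?_eq_some_head hw]

lemma StronglyConnected.exists_word {S : BoxLikeGIFS V E} (hS : S.StronglyConnected) (v v' : V) :
    ∃ g ≠ [], S.Admissible g ∧ S.wordInit g = v ∧ S.wordTerm g = v' := by
  induction hS v v' with
  | single h =>
    obtain ⟨e, he, he'⟩ := h
    exact ⟨[e], by simp, List.isChain_singleton e, he, he'⟩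
  | tail _ h ih =>
    obtain ⟨e, he, he'⟩ := h
    obtain ⟨g, hg, hgS, hg_init, hg_term⟩ := ih
    exact ⟨g ++ [e], by simp, (S.admissible_append_iff hg (by simp)).2
      ⟨hgS, List.isChain_singleton e, hg_term.trans he.symm⟩,
      (S.wordInit_append hg _).trans hg_init, (S.wordTerm_append g (by simp)).trans he'⟩

lemma TauInvariant.axisTau_wordTerm {S : BoxLikeGIFS V E} {τx τy : V → ℝ}
    (hτ : S.TauInvariant τx τy) {w : List E} (hw : w ≠ []) (hwS : S.Admissible w) (i : Bool) :
    axisTau τx τy (S.wordTerm w, i == S.wordDiag w) = axisTau τx τy (S.wordInit w, i) := by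
  induction w generalizing i with
  | nil => exact absurd rfl hw
  | cons e w ih =>
    rcases eq_or_ne w [] with rfl | hw'
    · simpa [wordDiag, wordTerm, wordInit] using hτ e i
    · obtain ⟨-, hwS', hjoin⟩ := (S.admissible_append_iff (u := [e]) (by simp) hw').1 hwS
      calc axisTau τx τy (S.wordTerm (e :: w), i == S.wordDiag (e :: w))
          = axisTau τx τy (S.wordTerm w, (i == S.diag e) == S.wordDiag w) := by
            rw [bool_beq_assoc, wordDiag, ← S.wordTerm_append [e] hw', List.singleton_append]
        _ = axisTau τx τy (S.wordInit w, i == S.diag e) := ih hw' hwS' _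
        _ = axisTau τx τy (S.term e, i == S.diag e) := by rw [← hjoin]; rfl
        _ = axisTau τx τy (S.init e, i) := hτ e i

section ModifiedSingularValue

variable {S} {p : E → ℝ} {τx τy : V → ℝ} {q s tq : ℝ}

/-- The weight `p_w^q c_w^{τx (i w)} d_w^{τy (i w)}`, whose exponents belong to the initial vertex
of `w`; it is the multiplicative factor of the modified singular value function. -/
noncomputable def pathWeight (S : BoxLikeGIFS V E) (p : E → ℝ) (τx τy : V → ℝ) (q : ℝ)
    (w : List E) : ℝ :=
  wordProb p w ^ q * ∏ i, S.wordSide w i ^ axisTau τx τy (S.wordInit w, i)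

lemma pathWeight_pos (hp : ∀ e, 0 < p e) (w : List E) : 0 < S.pathWeight p τx τy q w :=
  mul_pos (Real.rpow_pos_of_pos (wordProb_pos hp w) q)
    (Finset.prod_pos fun i _ => Real.rpow_pos_of_pos (S.wordSide_pos w i) _)

lemma TauInvariant.pathWeight_append (hτ : S.TauInvariant τx τy) (hp : ∀ e, 0 < p e)
    {u w : List E} (hu : u ≠ []) (huS : S.Admissible u) (hjoin : S.wordTerm u = S.wordInit w) :
    S.pathWeight p τx τy q (u ++ w) = S.pathWeight p τx τy q u * S.pathWeight p τx τy q w := by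
  have hside : ∀ i, S.wordSide (u ++ w) i ^ axisTau τx τy (S.wordInit u, i) =
      S.wordSide u i ^ axisTau τx τy (S.wordInit u, i) *
        S.wordSide w (i == S.wordDiag u) ^ axisTau τx τy (S.wordInit w, i == S.wordDiag u) :=
    fun i => by
      rw [wordSide_append, Real.mul_rpow (S.wordSide_pos u i).le (S.wordSide_pos w _).le, ← hjoin,
        hτ.axisTau_wordTerm hu huS]
  have hreindex :
      ∏ i, S.wordSide w (i == S.wordDiag u) ^ axisTau τx τy (S.wordInit w, i == S.wordDiag u) =
        ∏ i, S.wordSide w i ^ axisTau τx τy (S.wordInit w, i) :=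
    Function.Bijective.prod_comp (Function.Involutive.bijective fun i => Bool.beq_self_right i _)
      fun i => S.wordSide w i ^ axisTau τx τy (S.wordInit w, i)
  simp only [pathWeight, S.wordInit_append hu, hside]
  rw [wordProb_append, Real.mul_rpow (wordProb_pos hp u).le (wordProb_pos hp w).le,
    Finset.prod_mul_distrib, hreindex, mul_mul_mul_comm]

lemma exists_longest_axis (S : BoxLikeGIFS V E) (τx τy : V → ℝ) (w : List E) :
    ∃ j, S.alpha1 w = S.wordSide w j ∧ S.alpha2 w = S.wordSide w !j ∧
      S.wordTau τx τy w = axisTau τx τy (S.wordTerm w, j == S.wordDiag w) := by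
  rcases le_or_gt (S.wdims w).2 (S.wdims w).1 with h | h
  · refine ⟨false, max_eq_left h, min_eq_right h, ?_⟩
    rcases hd : S.wordDiag w <;> simp [wordTau, axisTau, h, hd]
  · refine ⟨true, max_eq_right h.le, min_eq_left h.le, ?_⟩
    rcases hd : S.wordDiag w <;> simp [wordTau, axisTau, h.not_ge, hd]

lemma TauInvariant.msvf_eq (hτ : S.TauInvariant τx τy) (htq : ∀ v, τx v + τy v = tq)
    {w : List E} (hw : w ≠ []) (hwS : S.Admissible w) :
    S.msvf p τx τy s q w = S.pathWeight p τx τy q w * S.alpha2 w ^ (s - tq) := by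
  obtain ⟨j, h1, h2, hj⟩ := S.exists_longest_axis τx τy w
  rw [hτ.axisTau_wordTerm hw hwS] at hj
  have hprod : ∏ i, S.wordSide w i ^ axisTau τx τy (S.wordInit w, i) =
      S.wordSide w j ^ axisTau τx τy (S.wordInit w, j) *
        S.wordSide w (!j) ^ axisTau τx τy (S.wordInit w, !j) := by
    cases j <;> simp [mul_comm]
  have hsum : axisTau τx τy (S.wordInit w, !j) =
      tq - axisTau τx τy (S.wordInit w, j) := by
    rw [← htq (S.wordInit w), ← axisTau_add_axisTau_not τx τy _ j, add_sub_cancel_left]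
  rw [msvf, pathWeight, hprod, h1, h2, hj, hsum, mul_assoc, mul_assoc, mul_assoc,
    ← Real.rpow_add (S.wordSide_pos w _), sub_add_sub_cancel']

lemma TauInvariant.msvf_mul_msvf (hτ : S.TauInvariant τx τy) (htq : ∀ v, τx v + τy v = tq)
    (hp : ∀ e, 0 < p e) {u w : List E} (hu : u ≠ []) (hw : w ≠ []) (h : S.Admissible (u ++ w)) :
    S.msvf p τx τy s q u * S.msvf p τx τy s q w =
      S.pathWeight p τx τy q (u ++ w) * (S.alpha2 u * S.alpha2 w) ^ (s - tq) := by
  obtain ⟨huS, hwS, hjoin⟩ := (S.admissible_append_iff hu hw).1 h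
  rw [hτ.msvf_eq htq hu huS, hτ.msvf_eq htq hw hwS, hτ.pathWeight_append hp hu huS hjoin,
    mul_mul_mul_comm, Real.mul_rpow (S.alpha2_pos u).le (S.alpha2_pos w).le]

lemma TauInvariant.msvf_append_le (hτ : S.TauInvariant τx τy) (htq : ∀ v, τx v + τy v = tq)
    (hp : ∀ e, 0 < p e) (hs : s ≤ tq) {u w : List E} (hu : u ≠ []) (hw : w ≠ [])
    (h : S.Admissible (u ++ w)) :
    S.msvf p τx τy s q (u ++ w) ≤ S.msvf p τx τy s q u * S.msvf p τx τy s q w := by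
  rw [hτ.msvf_mul_msvf htq hp hu hw h, hτ.msvf_eq htq (List.append_ne_nil_of_left_ne_nil hu w) h]
  exact mul_le_mul_of_nonneg_left (Real.rpow_le_rpow_of_nonpos
    (mul_pos (S.alpha2_pos u) (S.alpha2_pos w)) (S.alpha2_mul_le_append u w) (sub_nonpos.2 hs))
    (pathWeight_pos hp _).le

lemma TauInvariant.le_msvf_append (hτ : S.TauInvariant τx τy) (htq : ∀ v, τx v + τy v = tq)
    (hp : ∀ e, 0 < p e) (hs : tq ≤ s) {u w : List E} (hu : u ≠ []) (hw : w ≠ [])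
    (h : S.Admissible (u ++ w)) :
    S.msvf p τx τy s q u * S.msvf p τx τy s q w ≤ S.msvf p τx τy s q (u ++ w) := by
  rw [hτ.msvf_mul_msvf htq hp hu hw h, hτ.msvf_eq htq (List.append_ne_nil_of_left_ne_nil hu w) h]
  exact mul_le_mul_of_nonneg_left (Real.rpow_le_rpow
    (mul_pos (S.alpha2_pos u) (S.alpha2_pos w)).le (S.alpha2_mul_le_append u w) (sub_nonneg.2 hs))
    (pathWeight_pos hp _).le

/-- The modified singular value function extended by zero to the inadmissible words, so that its
sum over all words of length `k` is the norm of `A_k^{s,q}`. -/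
noncomputable def admMsvf (S : BoxLikeGIFS V E) (p : E → ℝ) (τx τy : V → ℝ) (s q : ℝ)
    (w : List E) : ℝ :=
  if S.Admissible w then S.msvf p τx τy s q w else 0

lemma msvf_pos (hp : ∀ e, 0 < p e) (w : List E) : 0 < S.msvf p τx τy s q w :=
  mul_pos (mul_pos (Real.rpow_pos_of_pos (wordProb_pos hp w) _)
    (Real.rpow_pos_of_pos ((S.alpha2_pos w).trans_le min_le_max) _))
    (Real.rpow_pos_of_pos (S.alpha2_pos w) _)

lemma admMsvf_pos (hp : ∀ e, 0 < p e) {w : List E} (hw : S.Admissible w) :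
    0 < S.admMsvf p τx τy s q w := by
  rw [admMsvf, if_pos hw]
  exact msvf_pos hp w

lemma admMsvf_nonneg (hp : ∀ e, 0 < p e) (w : List E) : 0 ≤ S.admMsvf p τx τy s q w := by
  unfold admMsvf
  split_ifs
  exacts [(msvf_pos hp w).le, le_rfl]

lemma TauInvariant.admMsvf_append_le (hτ : S.TauInvariant τx τy) (htq : ∀ v, τx v + τy v = tq)
    (hp : ∀ e, 0 < p e) (hs : s ≤ tq) {u w : List E} (hu : u ≠ []) (hw : w ≠ []) :
    S.admMsvf p τx τy s q (u ++ w) ≤ S.admMsvf p τx τy s q u * S.admMsvf p τx τy s q w := by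
  by_cases h : S.Admissible (u ++ w)
  · obtain ⟨huS, hwS, -⟩ := (S.admissible_append_iff hu hw).1 h
    simpa only [admMsvf, h, huS, hwS, if_true] using hτ.msvf_append_le htq hp hs hu hw h
  · rw [admMsvf, if_neg h]
    exact mul_nonneg (admMsvf_nonneg hp u) (admMsvf_nonneg hp w)

lemma TauInvariant.le_admMsvf_append (hτ : S.TauInvariant τx τy) (htq : ∀ v, τx v + τy v = tq)
    (hp : ∀ e, 0 < p e) (hs : tq ≤ s) {u w : List E} (hu : u ≠ []) (hw : w ≠ [])
    (hjoin : S.wordTerm u = S.wordInit w) :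
    S.admMsvf p τx τy s q u * S.admMsvf p τx τy s q w ≤ S.admMsvf p τx τy s q (u ++ w) := by
  by_cases h : S.Admissible u ∧ S.Admissible w
  · have huw := (S.admissible_append_iff hu hw).2 ⟨h.1, h.2, hjoin⟩
    simpa only [admMsvf, h.1, h.2, huw, if_true] using hτ.le_msvf_append htq hp hs hu hw huw
  · refine le_of_eq_of_le ?_ (admMsvf_nonneg hp _)
    rcases not_and_or.1 h with h | h <;> simp [admMsvf, h]

end ModifiedSingularValue

end Words

section WordSum

variable [Nonempty V] [Fintype E] {F : List E → ℝ}

lemma mnorm_Amat [Fintype V] (S : BoxLikeGIFS V E) {p : E → ℝ} (hp : ∀ e, 0 < p e)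
    (τx τy : V → ℝ) (s q : ℝ) (k : ℕ) :
    mnorm (S.Amat p τx τy s q k) = wordSum (S.admMsvf p τx τy s q) k := by
  have hentry : ∀ v v', |S.Amat p τx τy s q k v v'| = S.Amat p τx τy s q k v v' := fun v v' =>
    abs_of_nonneg <| Finset.sum_nonneg fun f _ => by
      split_ifs
      exacts [(msvf_pos hp _).le, le_rfl]
  simp only [mnorm, hentry]
  calc ∑ v, ∑ v', S.Amat p τx τy s q k v v' = ∑ f : Fin k → E, ∑ v, ∑ v',
        if S.Admissible (List.ofFn f) ∧ S.wordInit (List.ofFn f) = v ∧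
          S.wordTerm (List.ofFn f) = v' then S.msvf p τx τy s q (List.ofFn f) else 0 :=
        (Finset.sum_congr rfl fun v _ => Finset.sum_comm).trans Finset.sum_comm
    _ = wordSum (S.admMsvf p τx τy s q) k := Finset.sum_congr rfl fun f _ => by
        by_cases hf : S.Admissible (List.ofFn f) <;> simp [admMsvf, hf, ite_and]

lemma exists_mul_wordSum_le_succ (S : BoxLikeGIFS V E) (hF : ∀ w, 0 ≤ F w)
    (hF_edge : ∀ e, 0 < F [e])
    (hF_mul : ∀ u w, u ≠ [] → w ≠ [] → S.wordTerm u = S.wordInit w → F u * F w ≤ F (u ++ w)) :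
    ∃ c, 0 < c ∧ ∀ k ≠ 0, c * wordSum F k ≤ wordSum F (k + 1) := by
  choose next hnext using S.edge_exists
  have : Nonempty E := ⟨next (Classical.arbitrary V)⟩
  obtain ⟨e₀, he₀⟩ := Finite.exists_min fun e => F [e]
  refine ⟨F [e₀], hF_edge e₀, fun k hk => ?_⟩
  rw [mul_wordSum, wordSum_add]
  refine wordSum_mono hk fun u hu => ?_
  set e := next (S.wordTerm u)
  calc F [e₀] * F u ≤ F u * F [e] := by
        rw [mul_comm]
        exact mul_le_mul_of_nonneg_left (he₀ e) (hF u)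
    _ ≤ F (u ++ [e]) := hF_mul u [e] hu (by simp) (hnext (S.wordTerm u)).symm
    _ ≤ wordSum (fun w => F (u ++ w)) 1 := le_wordSum_length (fun _ => hF _) [e]

/-- The sum of `F u * F w` over the words `u` of length `k` ending at the vertex `v` and the words
`w` of length `l` starting at the vertex `v'`. -/
noncomputable def gapSum (S : BoxLikeGIFS V E) (F : List E → ℝ) (k l : ℕ) (v v' : V) : ℝ :=
  ∑ x : (Fin k → E) × (Fin l → E) with
    (S.wordTerm (List.ofFn x.1), S.wordInit (List.ofFn x.2)) = (v, v'),
    F (List.ofFn x.1) * F (List.ofFn x.2)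

lemma exists_wordSum_mul_div_card_le_gapSum [Fintype V] (S : BoxLikeGIFS V E) (F : List E → ℝ)
    (k l : ℕ) :
    ∃ v v', wordSum F k * wordSum F l / Fintype.card (V × V) ≤ S.gapSum F k l v v' := by
  have hcard : (Fintype.card (V × V) : ℝ) ≠ 0 := Nat.cast_ne_zero.2 Fintype.card_ne_zero
  obtain ⟨⟨v, v'⟩, hvv'⟩ := Fintype.exists_le_sum_fiber_of_nsmul_le_sum
    (fun x : (Fin k → E) × (Fin l → E) =>
      (S.wordTerm (List.ofFn x.1), S.wordInit (List.ofFn x.2)))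
    (w := fun x => F (List.ofFn x.1) * F (List.ofFn x.2))
    (b := wordSum F k * wordSum F l / Fintype.card (V × V)) (by
      rw [nsmul_eq_mul, mul_div_cancel₀ _ hcard, wordSum, wordSum, Fintype.sum_mul_sum,
        Fintype.sum_prod_type])
  exact ⟨v, v', hvv'⟩

lemma mul_gapSum_le_wordSum (S : BoxLikeGIFS V E) (hF : ∀ w, 0 ≤ F w)
    (hF_mul : ∀ u w, u ≠ [] → w ≠ [] → S.wordTerm u = S.wordInit w → F u * F w ≤ F (u ++ w))
    {g : List E} (hg : g ≠ []) {k l : ℕ} (hk : k ≠ 0) (hl : l ≠ 0) :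
    F g * S.gapSum F k l (S.wordInit g) (S.wordTerm g) ≤ wordSum F (k + g.length + l) := by
  rw [gapSum, Finset.mul_sum]
  refine le_trans (Finset.sum_le_sum fun x hx => ?_) (sum_append_append_le_wordSum hF g k l _)
  obtain ⟨hu, hw⟩ := Prod.mk.inj (Finset.mem_filter.1 hx).2
  set u := List.ofFn x.1
  set w := List.ofFn x.2
  calc F g * (F u * F w) = F u * F g * F w := by ring
    _ ≤ F (u ++ g) * F w :=
        mul_le_mul_of_nonneg_right (hF_mul u g (mt List.ofFn_eq_nil_iff.1 hk) hg hu) (hF w)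
    _ ≤ F (u ++ g ++ w) :=
        hF_mul (u ++ g) w (List.append_ne_nil_of_right_ne_nil u hg) (mt List.ofFn_eq_nil_iff.1 hl)
          ((S.wordTerm_append u hg).trans hw.symm)

lemma StronglyConnected.exists_mul_wordSum_mul_le [Finite V] {S : BoxLikeGIFS V E}
    (hSC : S.StronglyConnected) (hF : ∀ w, 0 ≤ F w)
    (hF_adm : ∀ w, S.Admissible w → 0 < F w)
    (hF_mul : ∀ u w, u ≠ [] → w ≠ [] → S.wordTerm u = S.wordInit w → F u * F w ≤ F (u ++ w)) :
    ∃ c, 0 < c ∧ ∃ J, ∀ k l, k ≠ 0 → l ≠ 0 →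
      ∃ j ≤ J, c * (wordSum F k * wordSum F l) ≤ wordSum F (k + j + l) := by
  have := Fintype.ofFinite V
  choose g hg hgS hg_init hg_term using hSC.exists_word
  obtain ⟨⟨v₀, v₀'⟩, hmin⟩ := Finite.exists_min fun x : V × V => F (g x.1 x.2)
  have hcard : (0 : ℝ) < Fintype.card (V × V) := Nat.cast_pos.2 Fintype.card_pos
  refine ⟨F (g v₀ v₀') / Fintype.card (V × V), div_pos (hF_adm _ (hgS _ _)) hcard,
    Finset.univ.sup fun x : V × V => (g x.1 x.2).length, fun k l hk hl => ?_⟩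
  obtain ⟨v, v', hgap⟩ := S.exists_wordSum_mul_div_card_le_gapSum F k l
  have hgap_nonneg : 0 ≤ S.gapSum F k l v v' :=
    Finset.sum_nonneg fun _ _ => mul_nonneg (hF _) (hF _)
  refine ⟨(g v v').length, Finset.le_sup (f := fun x : V × V => (g x.1 x.2).length)
    (Finset.mem_univ (v, v')), ?_⟩
  calc F (g v₀ v₀') / Fintype.card (V × V) * (wordSum F k * wordSum F l)
      = F (g v₀ v₀') * (wordSum F k * wordSum F l / Fintype.card (V × V)) := by ring
    _ ≤ F (g v₀ v₀') * S.gapSum F k l v v' := mul_le_mul_of_nonneg_left hgap (hF _)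
    _ ≤ F (g v v') * S.gapSum F k l v v' := mul_le_mul_of_nonneg_right (hmin (v, v')) hgap_nonneg
    _ ≤ wordSum F (k + (g v v').length + l) := by
        simpa only [hg_init, hg_term] using S.mul_gapSum_le_wordSum hF hF_mul (hg v v') hk hl

end WordSum

end BoxLikeGIFS

end LqGIFS

theorem statement15_general
    {V E : Type*} [Fintype V] [Fintype E] [Nonempty V]
    (S : BoxLikeGIFS V E) (p : E → ℝ) (hp : S.IsWeights p)
    (μ : V → Measure (ℝ × ℝ)) (hμ : S.IsGDMeasure p μ)
    (s q : ℝ) (hq : 0 ≤ q) (τx τy : V → ℝ)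
    (hτx : ∀ v : V, HasLq1 ((μ v).map Prod.fst) q (τx v))
    (hτy : ∀ v : V, HasLq1 ((μ v).map Prod.snd) q (τy v))
    (tq : ℝ) (htq : ∀ v : V, τx v + τy v = tq) :
    (s ≤ tq → ∀ k l : ℕ, 1 ≤ k → 1 ≤ l →
      mnorm (S.Amat p τx τy s q (k + l)) ≤
        mnorm (S.Amat p τx τy s q k) * mnorm (S.Amat p τx τy s q l)) ∧
    (tq ≤ s → ∃ c : ℝ, 0 < c ∧
      (∀ k : ℕ, 1 ≤ k →
        c * mnorm (S.Amat p τx τy s q k) ≤ mnorm (S.Amat p τx τy s q (k + 1))) ∧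
      (S.StronglyConnected → ∃ J : ℕ, ∀ k l : ℕ, 1 ≤ k → 1 ≤ l → ∃ j : ℕ, j ≤ J ∧
        c * (mnorm (S.Amat p τx τy s q k) * mnorm (S.Amat p τx τy s q l)) ≤
          mnorm (S.Amat p τx τy s q (k + j + l)))) := by
  have hτ : S.TauInvariant τx τy := S.tauInvariant_of_le htq fun e i =>
    hμ.axisTau_term_le hp hq (hasLq1_projMeas hτx hτy) e i
  have hF : ∀ w, 0 ≤ S.admMsvf p τx τy s q w := BoxLikeGIFS.admMsvf_nonneg hp.1
  have hF_adm : ∀ w, S.Admissible w → 0 < S.admMsvf p τx τy s q w := fun _ =>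
    BoxLikeGIFS.admMsvf_pos hp.1
  have hnonneg : ∀ k, 0 ≤ wordSum (S.admMsvf p τx τy s q) k := fun k =>
    Finset.sum_nonneg fun _ _ => hF _
  simp only [S.mnorm_Amat hp.1, Nat.one_le_iff_ne_zero]
  refine ⟨fun hs k l hk hl => wordSum_add_le hk hl fun u w hu hw =>
    hτ.admMsvf_append_le htq hp.1 hs hu hw, fun hs => ?_⟩
  have hF_mul := fun u w => hτ.le_admMsvf_append htq (q := q) hp.1 hs (u := u) (w := w)
  obtain ⟨c, hc, hstep⟩ := S.exists_mul_wordSum_le_succ hF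
    (fun e => hF_adm [e] (List.isChain_singleton e)) hF_mul
  by_cases hSC : S.StronglyConnected
  · obtain ⟨c', hc', J, hjoin⟩ := hSC.exists_mul_wordSum_mul_le hF hF_adm hF_mul
    refine ⟨min c c', lt_min hc hc', fun k hk => ?_, fun _ => ⟨J, fun k l hk hl => ?_⟩⟩
    · exact (mul_le_mul_of_nonneg_right (min_le_left c c') (hnonneg k)).trans (hstep k hk)
    · obtain ⟨j, hj, hle⟩ := hjoin k l hk hl
      exact ⟨j, hj, (mul_le_mul_of_nonneg_right (min_le_right c c')
        (mul_nonneg (hnonneg k) (hnonneg l))).trans hle⟩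
  · exact ⟨c, hc, hstep, fun h => absurd h hSC⟩

/-- norm estimates for the matrices `A_k^{s,q}`.  If `s ≤ t(q)` the
1-norms `‖A_k^{s,q}‖` are submultiplicative; if `s > t(q)` there are `c > 0` and `J ∈ ℕ`
with `‖A_{k+1}^{s,q}‖ ≥ c ‖A_k^{s,q}‖` and
`max_{0 ≤ j ≤ J} ‖A_{k+j+l}^{s,q}‖ ≥ c ‖A_k^{s,q}‖ ‖A_l^{s,q}‖`. -/
theorem statement15
    {V E : Type} [Fintype V] [Fintype E] [Nonempty V]
    (S : BoxLikeGIFS V E) (hSC : S.StronglyConnected)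
    (p : E → ℝ) (hp : S.IsWeights p)
    (μ : V → Measure (ℝ × ℝ)) (hμ : S.IsGDMeasure p μ)
    (s q : ℝ) (hq : 0 ≤ q)
    (τx τy : V → ℝ)
    (hτx : ∀ v : V, HasLq1 ((μ v).map Prod.fst) q (τx v))
    (hτy : ∀ v : V, HasLq1 ((μ v).map Prod.snd) q (τy v))
    (tq : ℝ) (htq : ∀ v : V, τx v + τy v = tq) :
    (s ≤ tq → ∀ k l : ℕ, 1 ≤ k → 1 ≤ l →
      mnorm (S.Amat p τx τy s q (k + l)) ≤
        mnorm (S.Amat p τx τy s q k) * mnorm (S.Amat p τx τy s q l)) ∧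
    (tq < s → ∃ c : ℝ, 0 < c ∧ ∃ J : ℕ,
      (∀ k : ℕ, 1 ≤ k →
        c * mnorm (S.Amat p τx τy s q k) ≤ mnorm (S.Amat p τx τy s q (k + 1))) ∧
      (∀ k l : ℕ, 1 ≤ k → 1 ≤ l → ∃ j : ℕ, j ≤ J ∧
        c * (mnorm (S.Amat p τx τy s q k) * mnorm (S.Amat p τx τy s q l)) ≤
          mnorm (S.Amat p τx τy s q (k + j + l)))) := by
  obtain ⟨hsub, hsuper⟩ := statement15_general S p hp μ hμ s q hq τx τy hτx hτy tq htq
  exact ⟨hsub, fun hs => let ⟨c, hc, hstep, hjoin⟩ := hsuper hs.le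
    let ⟨J, hJ⟩ := hjoin hSC; ⟨c, hc, J, hstep, hJ⟩⟩
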